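/- Let (n_p, n_r, ℓ_p, ℓ_r, S) be a paper assignment instance in which S is blockwise dominant with block identity A ∈ ℝ_{≥0}^{k×k} and block sizes (p_1,…,p_k), (r_1,…,r_k). Assume (i) r_1,…,r_k are not all equal, (ii) p_i·ℓ_p ≤ r_i·ℓ_r for all i ∈ {1,…,k}, and (iii) Q·r_i ≥ ℓ_p for all i ∈ {1,…,k}. Let f be a strictly concave perturbation function with f′(0) < Dom(A)·f′(1). Then for every x ∈ PM(Q,f) and every y ∈ PLRA(Q): Quality(x) ≥ Quality(y), Maxprob(x) ≤ Maxprob(y), AvgMaxp(x) ≤ AvgMaxp(y), L2Norm(x) ≤ L2Norm(y), Entropy(x) ≥ Entropy(y), and Support(x) ≥ Support(y). -/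

import Mathlib

open Finset

noncomputable section

/-- The feasible set `F(Q)` of randomized assignments. -/
def Feasible (np nr lp lr : ℕ) (Q : ℝ) (x : Fin np → Fin nr → ℝ) : Prop :=
  (∀ p, ∑ r, x p r = (lp : ℝ)) ∧ (∀ r, ∑ p, x p r ≤ (lr : ℝ)) ∧
    ∀ p r, 0 ≤ x p r ∧ x p r ≤ Q

/-- `Quality(x) = Σ_{p,r} x_{p,r} S_{p,r}`. -/
def Quality {np nr : ℕ} (S x : Fin np → Fin nr → ℝ) : ℝ :=
  ∑ p, ∑ r, x p r * S p r

/-- `PQuality_f(x) = Σ_{p,r} S_{p,r} f(x_{p,r})`. -/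
def PQuality {np nr : ℕ} (f : ℝ → ℝ) (S x : Fin np → Fin nr → ℝ) : ℝ :=
  ∑ p, ∑ r, S p r * f (x p r)

/-- `PLRA(Q)`: the set of maximizers of `Quality` over `F(Q)`. -/
def PLRA (np nr lp lr : ℕ) (Q : ℝ) (S : Fin np → Fin nr → ℝ) :
    Set (Fin np → Fin nr → ℝ) :=
  {x | Feasible np nr lp lr Q x ∧
    ∀ y, Feasible np nr lp lr Q y → Quality S y ≤ Quality S x}

/-- `PM(Q,f)`: the set of maximizers of `PQuality_f` over `F(Q)`. -/
def PM (np nr lp lr : ℕ) (Q : ℝ) (f : ℝ → ℝ) (S : Fin np → Fin nr → ℝ) :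
    Set (Fin np → Fin nr → ℝ) :=
  {x | Feasible np nr lp lr Q x ∧
    ∀ y, Feasible np nr lp lr Q y → PQuality f S y ≤ PQuality f S x}

/-- `Maxprob(x) = max_{p,r} x_{p,r}`. -/
def Maxprob {np nr : ℕ} (x : Fin np → Fin nr → ℝ) : ℝ := ⨆ p, ⨆ r, x p r

/-- `AvgMaxp(x) = (1/n_p) Σ_p max_r x_{p,r}`. -/
def AvgMaxp {np nr : ℕ} (x : Fin np → Fin nr → ℝ) : ℝ := (∑ p, ⨆ r, x p r) / np

/-- `Support(x) = #{(p,r) : x_{p,r} > 0}`. -/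
def SupportSize {np nr : ℕ} (x : Fin np → Fin nr → ℝ) : ℕ :=
  {pr : Fin np × Fin nr | 0 < x pr.1 pr.2}.ncard

/-- `Entropy(x) = -Σ_{p,r} x_{p,r} ln x_{p,r}` (with `Real.log 0 = 0`). -/
def Entropy {np nr : ℕ} (x : Fin np → Fin nr → ℝ) : ℝ :=
  -∑ p, ∑ r, x p r * Real.log (x p r)

/-- `L2Norm(x) = sqrt(Σ_{p,r} x_{p,r}²)`. -/
def L2Norm {np nr : ℕ} (x : Fin np → Fin nr → ℝ) : ℝ :=
  Real.sqrt (∑ p, ∑ r, (x p r) ^ 2)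

/-- A perturbation function: `f : [0,1] → [0,1]`, `f 0 = 0`, nondecreasing and concave
on `[0,1]` (differentiability is recorded separately via `HasDerivWithinAt`). -/
def IsPerturbation (f : ℝ → ℝ) : Prop :=
  f 0 = 0 ∧ (∀ t ∈ Set.Icc (0 : ℝ) 1, f t ∈ Set.Icc (0 : ℝ) 1) ∧
    MonotoneOn f (Set.Icc (0 : ℝ) 1) ∧ ConcaveOn ℝ (Set.Icc (0 : ℝ) 1) f

/-- `Dom(A) = sup {α : A i i ≥ α · A i j for all i ≠ j}`. -/
def DomA {k : ℕ} (A : Fin k → Fin k → ℝ) : ℝ :=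
  sSup {α : ℝ | ∀ i j, i ≠ j → α * A i j ≤ A i i}

/-!
Spread the load `ℓ_p` of each paper evenly over its own block. Put the Lagrange multiplier
`A i i * f' (ℓ_p / r_i)` on the row constraint of a paper in block `i`: strict concavity makes the
tangent line at `ℓ_p / r_i` dominate `A i i * f`, and `f' 0 * A i j < f' 1 * A i i` makes the line
of the same slope through `(0, A i j * f 0)` dominate `A i j * f` at every positive probability.
Hence this uniform assignment is the only element of `PM(Q, f)`. Since it attains the quality bound
`∑ p, ℓ_p * A i i`, every element of `PLRA(Q)` attains it too and is supported on the blocks;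
averaging a row over its block can only improve each metric, by Jensen's inequality for `t ^ 2` and
`t * log t`.
-/

section ConcaveTangents

variable {s : Set ℝ} {f f' : ℝ → ℝ}

lemma lt_tangent_of_strictConcaveOn {c t m : ℝ} (hf : StrictConcaveOn ℝ s f) (hc : c ∈ s)
    (ht : t ∈ s) (hne : t ≠ c) (hm : HasDerivWithinAt f m s c) : f t < f c + m * (t - c) := by
  rcases hne.lt_or_gt with h | h
  · have hslope := hf.lt_slope_of_hasDerivWithinAt ht hc h hm
    rw [slope_def_field, lt_div_iff₀ (sub_pos.2 h)] at hslope
    linarith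
  · have hslope := hf.slope_lt_of_hasDerivWithinAt hc ht h hm
    rw [slope_def_field, div_lt_iff₀ (sub_pos.2 h)] at hslope
    linarith

lemma antitoneOn_deriv_of_concaveOn (hf : ConcaveOn ℝ s f)
    (hderiv : ∀ t ∈ s, HasDerivWithinAt f (f' t) s t) : AntitoneOn f' s := by
  intro c hc t ht hct
  rcases hct.eq_or_lt with rfl | h
  · exact le_rfl
  · exact (hf.le_slope_of_hasDerivWithinAt hc ht h (hderiv t ht)).trans
      (hf.slope_le_of_hasDerivWithinAt hc ht h (hderiv c hc))

lemma mul_lt_of_concaveOn_of_mul_deriv_lt {a c t d m : ℝ} (hf : ConcaveOn ℝ s f) (hc : c ∈ s)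
    (ht : t ∈ s) (hct : c < t) (hd : HasDerivWithinAt f d s c) (ha : 0 ≤ a) (hdm : d * a < m) :
    a * f t < a * f c + m * (t - c) := by
  have hslope := hf.slope_le_of_hasDerivWithinAt hc ht hct hd
  rw [slope_def_field, div_le_iff₀ (sub_pos.2 hct)] at hslope
  calc a * f t ≤ a * (f c + d * (t - c)) := mul_le_mul_of_nonneg_left (by linarith) ha
    _ = a * f c + d * a * (t - c) := by ring
    _ < a * f c + m * (t - c) := by gcongr

end ConcaveTangents

lemma card_mul_map_average_le {α : Type*} {s : Set ℝ} {φ : ℝ → ℝ} {v : α → ℝ} {T : Finset α}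
    (hφ : ConvexOn ℝ s φ) (hv : ∀ r ∈ T, v r ∈ s) :
    #T * φ ((∑ r ∈ T, v r) / #T) ≤ ∑ r ∈ T, φ (v r) := by
  rcases T.eq_empty_or_nonempty with rfl | hT
  · simp
  have hcard : (0 : ℝ) < #T := by exact_mod_cast hT.card_pos
  have jensen := hφ.map_sum_le (w := fun _ => (#T : ℝ)⁻¹) (fun _ _ => by positivity)
    (by simp [hcard.ne']) hv
  simp only [smul_eq_mul, ← mul_sum] at jensen
  rwa [div_eq_inv_mul, ← le_inv_mul_iff₀ hcard]

/-- `M p` plays the role of a Lagrange multiplier for the prescribed sum of row `p`. -/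
lemma eq_of_forall_lt_tangent {P R : Type*} [Fintype P] [Fintype R] {G : P → R → ℝ → ℝ}
    {x u : P → R → ℝ} {M : P → ℝ}
    (htan : ∀ p r, x p r ≠ u p r → G p r (x p r) < G p r (u p r) + M p * (x p r - u p r))
    (hsum : ∀ p, ∑ r, x p r = ∑ r, u p r)
    (hle : ∑ p, ∑ r, G p r (u p r) ≤ ∑ p, ∑ r, G p r (x p r)) : x = u := by
  by_contra hne
  obtain ⟨p₀, hp₀⟩ := Function.ne_iff.1 hne
  obtain ⟨r₀, hr₀⟩ := Function.ne_iff.1 hp₀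
  have htan_le (p r) : G p r (x p r) ≤ G p r (u p r) + M p * (x p r - u p r) := by
    rcases eq_or_ne (x p r) (u p r) with h | h
    · simp [h]
    · exact (htan p r h).le
  have hrow (p) : ∑ r, (G p r (u p r) + M p * (x p r - u p r)) = ∑ r, G p r (u p r) := by
    rw [sum_add_distrib, ← mul_sum, sum_sub_distrib, hsum p, sub_self, mul_zero, add_zero]
  refine hle.not_gt (sum_lt_sum (fun p _ => ?_) ⟨p₀, mem_univ _, ?_⟩)
  · exact (sum_le_sum fun r _ => htan_le p r).trans_eq (hrow p)
  · exact (sum_lt_sum (fun r _ => htan_le p₀ r) ⟨r₀, mem_univ _, htan p₀ r₀ hr₀⟩).trans_eq (hrow p₀)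

section UniformRow

variable {R : Type*} [DecidableEq R] {T : Finset R} {a : ℝ} {v : R → ℝ} {φ : ℝ → ℝ}

/-- The vector that spreads the mass `a` evenly over `T`. When `T` is empty it vanishes, so its sum
is `a` only if `a = 0`. -/
def uniformRow (T : Finset R) (a : ℝ) (r : R) : ℝ := if r ∈ T then a / #T else 0

lemma uniformRow_of_mem {r : R} (hr : r ∈ T) : uniformRow T a r = a / #T := if_pos hr

lemma uniformRow_of_notMem {r : R} (hr : r ∉ T) : uniformRow T a r = 0 := if_neg hr

variable [Fintype R]

lemma sum_uniformRow (ha : #T = 0 → a = 0) : ∑ r, uniformRow T a r = a := by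
  rw [← sum_subset T.subset_univ fun r _ => uniformRow_of_notMem,
    sum_congr rfl fun r => uniformRow_of_mem, sum_const, nsmul_eq_mul]
  exact mul_div_cancel_of_imp' fun h => ha (by exact_mod_cast h)

lemma sum_comp_of_support_subset (hT : ∀ r ∉ T, v r = 0) :
    ∑ r, φ (v r) = ∑ r ∈ T, φ (v r) + #Tᶜ * φ 0 := by
  rw [← sum_add_sum_compl T, sum_congr (rfl : Tᶜ = Tᶜ) fun r hr => by rw [hT r (mem_compl.1 hr)],
    sum_const, nsmul_eq_mul]

lemma sum_comp_uniformRow_le {s : Set ℝ} (hφ : ConvexOn ℝ s φ) (hv : ∀ r, v r ∈ s)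
    (hsum : ∑ r, v r = a) (hT : ∀ r ∉ T, v r = 0) :
    ∑ r, φ (uniformRow T a r) ≤ ∑ r, φ (v r) := by
  rw [← sum_subset T.subset_univ fun r _ => hT r] at hsum
  rw [sum_comp_of_support_subset fun r => uniformRow_of_notMem, sum_comp_of_support_subset hT,
    sum_congr rfl fun r hr => by rw [uniformRow_of_mem hr], sum_const, nsmul_eq_mul, ← hsum]
  gcongr
  exact card_mul_map_average_le hφ fun r _ => hv r

lemma iSup_uniformRow_le (hv : ∀ r, 0 ≤ v r) (hsum : ∑ r, v r = a) (hT : ∀ r ∉ T, v r = 0) :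
    ⨆ r, uniformRow T a r ≤ ⨆ r, v r := by
  have hsup : 0 ≤ ⨆ r, v r := Real.iSup_nonneg hv
  refine Real.iSup_le (fun r => ?_) hsup
  unfold uniformRow
  split_ifs
  · refine div_le_of_le_mul₀ (Nat.cast_nonneg _) hsup ?_
    calc a = ∑ r ∈ T, v r := by rw [← hsum, sum_subset T.subset_univ fun r _ => hT r]
      _ ≤ #T • ⨆ r, v r :=
        sum_le_card_nsmul T v _ fun r _ => le_ciSup (Set.finite_range v).bddAbove r
      _ = (⨆ r, v r) * #T := by rw [nsmul_eq_mul, mul_comm]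
  · exact hsup

lemma uniformRow_pos_of_pos (hv : ∀ r, 0 ≤ v r) (hsum : ∑ r, v r = a) (hT : ∀ r ∉ T, v r = 0)
    {r : R} (hr : 0 < v r) : 0 < uniformRow T a r := by
  have hmem : r ∈ T := by_contra fun h => hr.ne' (hT r h)
  have ha : 0 < a := hsum ▸ sum_pos' (fun r _ => hv r) ⟨r, mem_univ r, hr⟩
  rw [uniformRow_of_mem hmem]
  exact div_pos ha (by exact_mod_cast card_pos.2 ⟨r, hmem⟩)

end UniformRow

section RowwiseAveraging

variable {np nr : ℕ} {T : Fin np → Finset (Fin nr)} {a : Fin np → ℝ} {y : Fin np → Fin nr → ℝ}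

lemma maxprob_uniformRow_le (hy : ∀ p r, 0 ≤ y p r) (hsum : ∀ p, ∑ r, y p r = a p)
    (hT : ∀ p, ∀ r ∉ T p, y p r = 0) : Maxprob (fun p => uniformRow (T p) (a p)) ≤ Maxprob y :=
  ciSup_mono (Set.finite_range _).bddAbove fun p => iSup_uniformRow_le (hy p) (hsum p) (hT p)

lemma avgMaxp_uniformRow_le (hy : ∀ p r, 0 ≤ y p r) (hsum : ∀ p, ∑ r, y p r = a p)
    (hT : ∀ p, ∀ r ∉ T p, y p r = 0) : AvgMaxp (fun p => uniformRow (T p) (a p)) ≤ AvgMaxp y :=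
  div_le_div_of_nonneg_right
    (sum_le_sum fun p _ => iSup_uniformRow_le (hy p) (hsum p) (hT p)) (Nat.cast_nonneg np)

lemma l2Norm_uniformRow_le (hsum : ∀ p, ∑ r, y p r = a p) (hT : ∀ p, ∀ r ∉ T p, y p r = 0) :
    L2Norm (fun p => uniformRow (T p) (a p)) ≤ L2Norm y :=
  Real.sqrt_le_sqrt <| sum_le_sum fun p _ =>
    sum_comp_uniformRow_le even_two.convexOn_pow (fun _ => Set.mem_univ _) (hsum p) (hT p)

lemma entropy_le_entropy_uniformRow (hy : ∀ p r, 0 ≤ y p r) (hsum : ∀ p, ∑ r, y p r = a p)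
    (hT : ∀ p, ∀ r ∉ T p, y p r = 0) : Entropy y ≤ Entropy (fun p => uniformRow (T p) (a p)) :=
  neg_le_neg <| sum_le_sum fun p _ =>
    sum_comp_uniformRow_le Real.convexOn_mul_log (hy p) (hsum p) (hT p)

lemma supportSize_le_supportSize_uniformRow (hy : ∀ p r, 0 ≤ y p r)
    (hsum : ∀ p, ∑ r, y p r = a p) (hT : ∀ p, ∀ r ∉ T p, y p r = 0) :
    SupportSize y ≤ SupportSize (fun p => uniformRow (T p) (a p)) :=
  Set.ncard_le_ncard (fun pr => uniformRow_pos_of_pos (hy pr.1) (hsum pr.1) (hT pr.1))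
    (Set.toFinite _)

end RowwiseAveraging

section QualityBound

variable {np nr : ℕ} {T : Fin np → Finset (Fin nr)} {a w : Fin np → ℝ}
  {S y : Fin np → Fin nr → ℝ}

lemma sum_mul_sub_quality (hsum : ∀ p, ∑ r, y p r = a p) :
    ∑ p, a p * w p - Quality S y = ∑ p, ∑ r, y p r * (w p - S p r) := by
  simp only [Quality, mul_sub, sum_sub_distrib, ← sum_mul, hsum]

lemma quality_eq_of_support_subset (hsum : ∀ p, ∑ r, y p r = a p)
    (hT : ∀ p, ∀ r ∉ T p, y p r = 0) (hS : ∀ p, ∀ r ∈ T p, S p r = w p) :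
    Quality S y = ∑ p, a p * w p := by
  refine (sub_eq_zero.1 ?_).symm
  rw [sum_mul_sub_quality hsum]
  refine sum_eq_zero fun p _ => sum_eq_zero fun r _ => ?_
  by_cases hr : r ∈ T p
  · rw [hS p r hr, sub_self, mul_zero]
  · rw [hT p r hr, zero_mul]

lemma support_subset_of_le_quality (hy : ∀ p r, 0 ≤ y p r) (hsum : ∀ p, ∑ r, y p r = a p)
    (hS : ∀ p, ∀ r ∈ T p, S p r = w p) (hlt : ∀ p, ∀ r ∉ T p, S p r < w p)
    (hle : ∑ p, a p * w p ≤ Quality S y) : ∀ p, ∀ r ∉ T p, y p r = 0 := by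
  have hterm (p r) : 0 ≤ y p r * (w p - S p r) := by
    refine mul_nonneg (hy p r) (sub_nonneg.2 ?_)
    by_cases hr : r ∈ T p
    exacts [(hS p r hr).le, (hlt p r hr).le]
  have hrow (p) : 0 ≤ ∑ r, y p r * (w p - S p r) := sum_nonneg fun r _ => hterm p r
  have hzero : ∑ p, ∑ r, y p r * (w p - S p r) = 0 :=
    (sum_mul_sub_quality hsum ▸ sub_nonpos.2 hle).antisymm (sum_nonneg fun p _ => hrow p)
  intro p r hr
  have hrow_zero := (sum_eq_zero_iff_of_nonneg fun p _ => hrow p).1 hzero p (mem_univ p)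
  have hterm_zero := (sum_eq_zero_iff_of_nonneg fun r _ => hterm p r).1 hrow_zero r (mem_univ r)
  exact (mul_eq_zero.1 hterm_zero).resolve_right (sub_pos.2 (hlt p r hr)).ne'

end QualityBound

section Blocks

variable {np nr lp lr : ℕ} {Q : ℝ} {ι : Type*} [DecidableEq ι] {S x y : Fin np → Fin nr → ℝ}
  {A : ι → ι → ℝ} {pg : Fin np → ι} {rg : Fin nr → ι}

/-- The reviewers belonging to the same group as the paper `p`. -/
def ownBlock (pg : Fin np → ι) (rg : Fin nr → ι) (p : Fin np) : Finset (Fin nr) :=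
  {r | rg r = pg p}

lemma mem_ownBlock {p : Fin np} {r : Fin nr} : r ∈ ownBlock pg rg p ↔ rg r = pg p := by
  simp [ownBlock]

/-- The assignment that spreads the load `lp` of each paper evenly over the reviewers of its own
group; this is the unique element of `PM(Q, f)`. -/
abbrev blockUniform (pg : Fin np → ι) (rg : Fin nr → ι) (lp : ℕ) : Fin np → Fin nr → ℝ :=
  fun p => uniformRow (ownBlock pg rg p) lp

lemma ncard_fiber {α : Type*} [Fintype α] (g : α → ι) (i : ι) :
    {a | g a = i}.ncard = #{a | g a = i} := by
  rw [← Set.ncard_coe_finset, coe_filter_univ]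

lemma div_mem_Icc_of_le_mul {a b : ℝ} (ha : 0 ≤ a) (hb : 0 ≤ b) (hQ : 0 ≤ Q) (hab : a ≤ Q * b) :
    a / b ∈ Set.Icc 0 Q :=
  ⟨div_nonneg ha hb, div_le_of_le_mul₀ hb hQ hab⟩

lemma feasible_blockUniform (hQ : 0 ≤ Q)
    (hload : ∀ i, #{p | pg p = i} * lp ≤ #{r | rg r = i} * lr)
    (hQr : ∀ i, (lp : ℝ) ≤ Q * #{r | rg r = i}) :
    Feasible np nr lp lr Q (blockUniform pg rg lp) := by
  refine ⟨fun p => sum_uniformRow fun h => ?_, fun r => ?_, fun p r => ?_⟩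
  · have hlp : (lp : ℝ) ≤ Q * #(ownBlock pg rg p) := hQr (pg p)
    rw [h, Nat.cast_zero, mul_zero] at hlp
    exact hlp.antisymm lp.cast_nonneg
  · have hcol (p) : blockUniform pg rg lp p r
        = if pg p = rg r then (lp : ℝ) / #{r' | rg r' = rg r} else 0 := by
      by_cases h : rg r = pg p
      · rw [if_pos h.symm, blockUniform, uniformRow_of_mem (mem_ownBlock.2 h), ownBlock, h]
      · rw [if_neg (Ne.symm h), blockUniform, uniformRow_of_notMem (mt mem_ownBlock.1 h)]
    rw [sum_congr rfl fun p _ => hcol p, ← sum_filter, sum_const, nsmul_eq_mul, ← mul_div_assoc]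
    refine div_le_of_le_mul₀ (Nat.cast_nonneg _) lr.cast_nonneg ?_
    rw [mul_comm (lr : ℝ)]
    exact_mod_cast hload (rg r)
  · rw [blockUniform, uniformRow]
    split_ifs
    · exact div_mem_Icc_of_le_mul lp.cast_nonneg (Nat.cast_nonneg _) hQ (hQr (pg p))
    · exact ⟨le_rfl, hQ⟩

lemma eq_blockUniform_of_mem_pm {f f' : ℝ → ℝ} (hQ : Q ∈ Set.Icc (0 : ℝ) 1)
    (hSA : ∀ p r, S p r = A (pg p) (rg r)) (hA0 : ∀ i j, i ≠ j → 0 ≤ A i j)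
    (hApos : ∀ i, 0 < A i i) (hQr : ∀ i, (lp : ℝ) ≤ Q * #{r | rg r = i})
    (hstrict : StrictConcaveOn ℝ (Set.Icc (0 : ℝ) 1) f)
    (hderiv : ∀ t ∈ Set.Icc (0 : ℝ) 1, HasDerivWithinAt f (f' t) (Set.Icc (0 : ℝ) 1) t)
    (hdom : ∀ i j, i ≠ j → f' 0 * A i j < f' 1 * A i i)
    (hu : Feasible np nr lp lr Q (blockUniform pg rg lp)) (hx : x ∈ PM np nr lp lr Q f S) :
    x = blockUniform pg rg lp := by
  obtain ⟨hxF, hxmax⟩ := hx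
  have h0 : (0 : ℝ) ∈ Set.Icc (0 : ℝ) 1 := ⟨le_rfl, zero_le_one⟩
  have h1 : (1 : ℝ) ∈ Set.Icc (0 : ℝ) 1 := ⟨zero_le_one, le_rfl⟩
  have hxI (p r) : x p r ∈ Set.Icc (0 : ℝ) 1 := Set.Icc_subset_Icc_right hQ.2 (hxF.2.2 p r)
  have hc (p) : (lp / #(ownBlock pg rg p) : ℝ) ∈ Set.Icc (0 : ℝ) 1 :=
    Set.Icc_subset_Icc_right hQ.2
      (div_mem_Icc_of_le_mul lp.cast_nonneg (Nat.cast_nonneg _) hQ.1 (hQr (pg p)))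
  refine eq_of_forall_lt_tangent (G := fun p r t => S p r * f t)
    (M := fun p => A (pg p) (pg p) * f' (lp / #(ownBlock pg rg p))) (fun p r hne => ?_)
    (fun p => (hxF.1 p).trans (hu.1 p).symm) (hxmax _ hu)
  by_cases hr : rg r = pg p
  · rw [blockUniform, uniformRow_of_mem (mem_ownBlock.2 hr)] at hne ⊢
    rw [hSA, hr, mul_assoc, ← mul_add]
    exact mul_lt_mul_of_pos_left
      (lt_tangent_of_strictConcaveOn hstrict (hc p) (hxI p r) hne (hderiv _ (hc p))) (hApos _)
  · rw [blockUniform, uniformRow_of_notMem (mt mem_ownBlock.1 hr)] at hne ⊢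
    refine mul_lt_of_concaveOn_of_mul_deriv_lt hstrict.concaveOn h0 (hxI p r)
      ((hxI p r).1.lt_of_ne' hne) (hderiv 0 h0) (hSA p r ▸ hA0 _ _ (Ne.symm hr)) ?_
    have hf'1 : f' 1 ≤ f' (lp / #(ownBlock pg rg p)) :=
      antitoneOn_deriv_of_concaveOn hstrict.concaveOn hderiv (hc p) h1 (hc p).2
    calc f' 0 * S p r < f' 1 * A (pg p) (pg p) := hSA p r ▸ hdom _ _ (Ne.symm hr)
      _ ≤ A (pg p) (pg p) * f' (lp / #(ownBlock pg rg p)) := by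
        rw [mul_comm]
        exact mul_le_mul_of_nonneg_left hf'1 (hApos _).le

lemma eq_diag_of_mem_ownBlock (hSA : ∀ p r, S p r = A (pg p) (rg r)) (p : Fin np) :
    ∀ r ∈ ownBlock pg rg p, S p r = A (pg p) (pg p) := fun r hr => by
  rw [hSA, mem_ownBlock.1 hr]

lemma quality_eq_of_support_subset_ownBlock (hSA : ∀ p r, S p r = A (pg p) (rg r))
    (hsum : ∀ p, ∑ r, y p r = lp) (hy : ∀ p, ∀ r ∉ ownBlock pg rg p, y p r = 0) :
    Quality S y = ∑ p, lp * A (pg p) (pg p) :=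
  quality_eq_of_support_subset hsum hy (eq_diag_of_mem_ownBlock hSA)

lemma support_subset_of_mem_plra (hSA : ∀ p r, S p r = A (pg p) (rg r))
    (hdiag : ∀ i j, i ≠ j → A i j < A i i)
    (hu : Feasible np nr lp lr Q (blockUniform pg rg lp)) (hy : y ∈ PLRA np nr lp lr Q S) :
    ∀ p, ∀ r ∉ ownBlock pg rg p, y p r = 0 := by
  have hother (p) : ∀ r ∉ ownBlock pg rg p, S p r < A (pg p) (pg p) := fun r hr => by
    rw [hSA]
    exact hdiag _ _ fun h => hr (mem_ownBlock.2 h.symm)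
  refine support_subset_of_le_quality (fun p r => (hy.1.2.2 p r).1) hy.1.1
    (eq_diag_of_mem_ownBlock hSA) hother ?_
  rw [← quality_eq_of_support_subset_ownBlock hSA hu.1 fun p r => uniformRow_of_notMem]
  exact hy.2 _ hu

end Blocks

section Dominance

variable {k : ℕ} {A : Fin k → Fin k → ℝ}

lemma domA_mul_le (hA0 : ∀ i j, 0 ≤ A i j) {i j : Fin k} (hij : i ≠ j) :
    DomA A * A i j ≤ A i i := by
  rcases (hA0 i j).eq_or_lt with h | h
  · rw [← h, mul_zero]
    exact hA0 i i
  · rw [← le_div_iff₀ h]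
    refine csSup_le ⟨0, fun i j _ => ?_⟩ fun α hα => (le_div_iff₀ h).2 (hα i j hij)
    rw [zero_mul]
    exact hA0 i i

lemma domA_nonneg (hA0 : ∀ i j, 0 ≤ A i j) : 0 ≤ DomA A :=
  Real.sSup_nonneg' ⟨0, fun i j _ => by rw [zero_mul]; exact hA0 i i, le_rfl⟩

lemma mul_lt_mul_of_lt_domA_mul (hA0 : ∀ i j, 0 ≤ A i j) (hdiag : ∀ i j, i ≠ j → A i j < A i i)
    {b c : ℝ} (hb : 0 ≤ b) (hbc : b < DomA A * c) {i j : Fin k} (hij : i ≠ j) :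
    b * A i j < c * A i i := by
  have hc : 0 < c := pos_of_mul_pos_right (hb.trans_lt hbc) (domA_nonneg hA0)
  rcases (hA0 i j).eq_or_lt with h | h
  · rw [← h, mul_zero]
    exact mul_pos hc (h.trans_lt (hdiag i j hij))
  · calc b * A i j < DomA A * c * A i j := mul_lt_mul_of_pos_right hbc h
      _ = c * (DomA A * A i j) := by ring
      _ ≤ c * A i i := mul_le_mul_of_nonneg_left (domA_mul_le hA0 hij) hc.le

end Dominance

lemma diag_pos_of_dominant {ι : Type*} [Nontrivial ι] {A : ι → ι → ℝ} (hA0 : ∀ i j, 0 ≤ A i j)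
    (hdiag : ∀ i j, i ≠ j → A i j < A i i) (i : ι) : 0 < A i i :=
  let ⟨j, hj⟩ := exists_ne i
  (hA0 i j).trans_lt (hdiag i j hj.symm)

lemma IsPerturbation.deriv_nonneg {f : ℝ → ℝ} {m t : ℝ} (hf : IsPerturbation f)
    (ht : t ∈ Set.Icc (0 : ℝ) 1) (hm : HasDerivWithinAt f m (Set.Icc (0 : ℝ) 1) t) : 0 ≤ m :=
  hm.derivWithin (uniqueDiffOn_Icc zero_lt_one t ht) ▸ hf.2.2.1.derivWithin_nonneg

/-- `hdom` is the condition `f′(0) < Dom(A) · f′(1)` with `Dom(A) = ∞` allowed; `DomA A` takes the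
junk value `0` when all off-diagonal entries of `A` vanish. -/
theorem stmt0_general {ι : Type*} (np nr lp lr : ℕ) (Q : ℝ)
    (hQ : Q ∈ Set.Icc (0 : ℝ) 1) (S : Fin np → Fin nr → ℝ) (A : ι → ι → ℝ)
    (pg : Fin np → ι) (rg : Fin nr → ι)
    (hA0 : ∀ i j, i ≠ j → 0 ≤ A i j) (hApos : ∀ i, 0 < A i i)
    (hSA : ∀ p r, S p r = A (pg p) (rg r))
    (hdiag : ∀ i j, i ≠ j → A i j < A i i)
    (hload : ∀ i, {p | pg p = i}.ncard * lp ≤ {r | rg r = i}.ncard * lr)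
    (hQr : ∀ i, (lp : ℝ) ≤ Q * {r | rg r = i}.ncard)
    (f f' : ℝ → ℝ) (hstrict : StrictConcaveOn ℝ (Set.Icc (0 : ℝ) 1) f)
    (hderiv : ∀ t ∈ Set.Icc (0 : ℝ) 1, HasDerivWithinAt f (f' t) (Set.Icc (0 : ℝ) 1) t)
    (hdom : ∀ i j, i ≠ j → f' 0 * A i j < f' 1 * A i i) :
    ∀ x ∈ PM np nr lp lr Q f S, ∀ y ∈ PLRA np nr lp lr Q S,
      Quality S y ≤ Quality S x ∧
      Maxprob x ≤ Maxprob y ∧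
      AvgMaxp x ≤ AvgMaxp y ∧
      L2Norm x ≤ L2Norm y ∧
      Entropy y ≤ Entropy x ∧
      SupportSize y ≤ SupportSize x := by
  classical
  intro x hx y hy
  simp only [ncard_fiber] at hload hQr
  have hu : Feasible np nr lp lr Q (blockUniform pg rg lp) := feasible_blockUniform hQ.1 hload hQr
  obtain rfl : x = blockUniform pg rg lp :=
    eq_blockUniform_of_mem_pm hQ hSA hA0 hApos hQr hstrict hderiv hdom hu hx
  have hsupp : ∀ p, ∀ r ∉ ownBlock pg rg p, y p r = 0 := support_subset_of_mem_plra hSA hdiag hu hy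
  have hsum : ∀ p, ∑ r, y p r = lp := hy.1.1
  have hnonneg (p r) : 0 ≤ y p r := (hy.1.2.2 p r).1
  refine ⟨?_, maxprob_uniformRow_le hnonneg hsum hsupp, avgMaxp_uniformRow_le hnonneg hsum hsupp,
    l2Norm_uniformRow_le hsum hsupp, entropy_le_entropy_uniformRow hnonneg hsum hsupp,
    supportSize_le_supportSize_uniformRow hnonneg hsum hsupp⟩
  rw [quality_eq_of_support_subset_ownBlock hSA hsum hsupp,
    quality_eq_of_support_subset_ownBlock hSA hu.1 fun p r => uniformRow_of_notMem]

/-- on blockwise dominant similarity matrices, every solution of PM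
(with a strictly concave perturbation function satisfying `f′(0) < Dom(A)·f′(1)`)
weakly dominates every solution of PLRA on quality and all randomness metrics. -/
theorem stmt0 (np nr k lp lr : ℕ) (Q : ℝ) (hQ : Q ∈ Set.Icc (0 : ℝ) 1)
    (S : Fin np → Fin nr → ℝ) (A : Fin k → Fin k → ℝ)
    (pg : Fin np → Fin k) (rg : Fin nr → Fin k)
    (hA0 : ∀ i j, 0 ≤ A i j)
    (hSA : ∀ p r, S p r = A (pg p) (rg r))
    (hdiag : ∀ i j, i ≠ j → A i j < A i i)
    (hne : ¬ ∀ i j : Fin k,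
      {r : Fin nr | rg r = i}.ncard = {r : Fin nr | rg r = j}.ncard)
    (hload : ∀ i : Fin k,
      {p : Fin np | pg p = i}.ncard * lp ≤ {r : Fin nr | rg r = i}.ncard * lr)
    (hQr : ∀ i : Fin k, (lp : ℝ) ≤ Q * {r : Fin nr | rg r = i}.ncard)
    (f f' : ℝ → ℝ) (hf : IsPerturbation f)
    (hstrict : StrictConcaveOn ℝ (Set.Icc (0 : ℝ) 1) f)
    (hderiv : ∀ t ∈ Set.Icc (0 : ℝ) 1, HasDerivWithinAt f (f' t) (Set.Icc (0 : ℝ) 1) t)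
    (hf' : f' 0 < DomA A * f' 1) :
    ∀ x ∈ PM np nr lp lr Q f S, ∀ y ∈ PLRA np nr lp lr Q S,
      Quality S y ≤ Quality S x ∧
      Maxprob x ≤ Maxprob y ∧
      AvgMaxp x ≤ AvgMaxp y ∧
      L2Norm x ≤ L2Norm y ∧
      Entropy y ≤ Entropy x ∧
      SupportSize y ≤ SupportSize x := by
  have : Nontrivial (Fin k) := not_subsingleton_iff_nontrivial.1 fun _ =>
    hne fun i j => by rw [Subsingleton.elim i j]
  have hf'0 : 0 ≤ f' 0 := hf.deriv_nonneg ⟨le_rfl, zero_le_one⟩ (hderiv 0 ⟨le_rfl, zero_le_one⟩)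
  exact stmt0_general np nr lp lr Q hQ S A pg rg (fun i j _ => hA0 i j)
    (diag_pos_of_dominant hA0 hdiag) hSA hdiag hload hQr f f' hstrict hderiv
    fun i j hij => mul_lt_mul_of_lt_domA_mul hA0 hdiag hf'0 hf' hij
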